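/- arXiv:1009.3151 — 2 statements merged into one kernel-verified Lean document; each statement's English description precedes it below -/
import Mathlib

section
/- Let E be a real normed vector space, let k ≥ 2 be even, and let H : E^k → ℝ be twice continuously Fréchet differentiable and cyclic, i.e. H(w₁,…,w_k) = H(w₂,…,w_k,w₁) for all arguments. Define 𝓗 : E → ℝ by 𝓗(u) = H(u,…,u), and for u ∈ E set B_{1ℓ}(h,h) := D²H(u,…,u)(ι₁ h, ι_ℓ h), where ι_j h ∈ E^k is the tuple with h in slot j and 0 elsewhere. Then for all u, h ∈ E: D²𝓗(u)(h,h) = k ( B_{11}(h,h) + 2 Σ_{ℓ=2}^{k/2} B_{1ℓ}(h,h) + B_{1, k/2+1}(h,h) ). -/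
/-!
The chain rule along the diagonal embedding gives `D²𝓗(u)(h,h) = ∑ i, ∑ j, B i j`, where
`B i j = D²H(u,…,u)(ι_i h, ι_j h)`. Cyclicity of `H` makes `B` invariant under simultaneous
translation of both indices modulo `k`, so every row of `B` has the same sum and
`D²𝓗(u)(h,h) = k ∑ d, B 0 d`. Symmetry of `D²H` together with translation invariance gives
`B 0 (-d) = B 0 d`, which folds the row sum around its fixed points `0` and `k / 2`.
-/

open Finset

section SecondDerivative

variable {𝕜 : Type*} [NontriviallyNormedField 𝕜]
  {E : Type*} [NormedAddCommGroup E] [NormedSpace 𝕜 E]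
  {F : Type*} [NormedAddCommGroup F] [NormedSpace 𝕜 F]
  {G : Type*} [NormedAddCommGroup G] [NormedSpace 𝕜 G]

theorem fderiv_fderiv_comp_continuousLinearMap {f : G → F} (L : E →L[𝕜] G) {x : E}
    (hf : ContDiffAt 𝕜 2 f (L x)) (a b : E) :
    fderiv 𝕜 (fderiv 𝕜 (fun y => f (L y))) x a b =
      fderiv 𝕜 (fderiv 𝕜 f) (L x) (L a) (L b) := by
  have fderiv_comp_near : fderiv 𝕜 (fun y => f (L y)) =ᶠ[nhds x]
      fun y => (fderiv 𝕜 f (L y)).comp L := by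
    have contDiffAt_near := L.continuous.continuousAt.eventually (hf.eventually (by simp))
    filter_upwards [contDiffAt_near] with y hy
    exact ((hy.differentiableAt (by simp)).hasFDerivAt.comp y L.hasFDerivAt).fderiv
  have fderiv_differentiableAt : DifferentiableAt 𝕜 (fderiv 𝕜 f) (L x) :=
    (hf.fderiv_right (m := 1) (by norm_num)).differentiableAt (by simp)
  have hasFDerivAt_fderiv : HasFDerivAt (fun y => fderiv 𝕜 f (L y))
      ((fderiv 𝕜 (fderiv 𝕜 f) (L x)).comp L) x :=
    fderiv_differentiableAt.hasFDerivAt.comp x L.hasFDerivAt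
  rw [fderiv_comp_near.fderiv_eq, (hasFDerivAt_fderiv.clm_comp (hasFDerivAt_const L x)).fderiv]
  simp

variable {ι : Type*} [Fintype ι] [DecidableEq ι]

variable (𝕜) in
/-- The block `B_{ij}(h, h) = D²H(u, …, u)(ι_i h, ι_j h)` of the Hessian of `H` at the diagonal
point `(u, …, u)`. Slots are indexed by an arbitrary finite type `ι`, and `ι_i h` is
`Pi.single i h`. -/
noncomputable def diagHessian (H : (ι → E) → F) (u h : E) (i j : ι) : F :=
  fderiv 𝕜 (fderiv 𝕜 H) (fun _ => u) (Pi.single i h) (Pi.single j h)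

variable {H : (ι → E) → F} {u : E}

theorem diagHessian_comm {n : WithTop ℕ∞} (hn : minSmoothness 𝕜 2 ≤ n)
    (hH : ContDiffAt 𝕜 n H (fun _ => u)) (h : E) (i j : ι) :
    diagHessian 𝕜 H u h i j = diagHessian 𝕜 H u h j i :=
  hH.isSymmSndFDerivAt hn _ _

theorem diagHessian_perm (hH : ContDiffAt 𝕜 2 H (fun _ => u)) (σ : Equiv.Perm ι)
    (hσ : ∀ w, H (fun i => w (σ i)) = H w) (h : E) (i j : ι) :
    diagHessian 𝕜 H u h (σ i) (σ j) = diagHessian 𝕜 H u h i j := by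
  let permute : (ι → E) →L[𝕜] (ι → E) := .pi fun i => .proj (σ i)
  have permute_single (i : ι) : permute (Pi.single (σ i) h) = Pi.single i h := by
    ext j
    simp [permute, Pi.single_apply]
  have chain_rule := fderiv_fderiv_comp_continuousLinearMap permute (x := fun _ => u) hH
    (Pi.single (σ i) h) (Pi.single (σ j) h)
  rw [permute_single, permute_single, show (fun w => H (permute w)) = H from funext hσ]
    at chain_rule
  exact chain_rule

theorem fderiv_fderiv_diag_eq_sum_diagHessian (hH : ContDiffAt 𝕜 2 H (fun _ => u)) (h : E) :
    fderiv 𝕜 (fderiv 𝕜 (fun x => H fun _ => x)) u h h =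
      ∑ i, ∑ j, diagHessian 𝕜 H u h i j := by
  let diag : E →L[𝕜] (ι → E) := .pi fun _ => .id 𝕜 E
  have diag_eq_sum : diag h = ∑ i, Pi.single i h := (univ_sum_single (diag h)).symm
  calc fderiv 𝕜 (fderiv 𝕜 (fun x => H fun _ => x)) u h h
      = fderiv 𝕜 (fderiv 𝕜 H) (fun _ => u) (diag h) (diag h) :=
        fderiv_fderiv_comp_continuousLinearMap diag hH h h
    _ = ∑ i, ∑ j, diagHessian 𝕜 H u h i j := by
        simp only [diag_eq_sum, map_sum, _root_.sum_apply, diagHessian]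
        exact sum_comm

end SecondDerivative

section TranslationInvariant

variable {A M : Type*} [AddGroup A] {b : A → A → M}

theorem apply_zero_neg_of_symm_of_add_right (hsymm : ∀ i j, b i j = b j i)
    (hadd : ∀ d i j, b (i + d) (j + d) = b i j) (d : A) : b 0 (-d) = b 0 d := by
  rw [← hadd d 0 (-d), zero_add, neg_add_cancel, hsymm]

theorem sum_sum_eq_card_nsmul_of_add_right [Fintype A] [AddCommMonoid M]
    (hadd : ∀ d i j, b (i + d) (j + d) = b i j) :
    ∑ i, ∑ j, b i j = Fintype.card A • ∑ d, b 0 d := by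
  have row_sum (i : A) : ∑ j, b i j = ∑ d, b 0 d :=
    calc ∑ j, b i j = ∑ d, b i (d + i) := (Equiv.sum_comp (Equiv.addRight i) (b i)).symm
      _ = ∑ d, b 0 d := sum_congr rfl fun d _ => by rw [← hadd i 0 d, zero_add]
  simp only [row_sum, sum_const, card_univ]

end TranslationInvariant

theorem neg_fin_ofNat {k : ℕ} [NeZero k] {n : ℕ} (hn : n ≤ k) :
    -Fin.ofNat k n = Fin.ofNat k (k - n) := by
  rw [neg_eq_iff_add_eq_zero]
  ext
  simp only [Fin.val_add, Fin.val_ofNat, Nat.add_mod_mod, Nat.mod_add_mod, Fin.val_zero,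
    Nat.add_sub_cancel' hn, Nat.mod_self]

section EvenSum

variable {M : Type*} [AddCommMonoid M]

theorem sum_range_two_mul_of_reflect {c : ℕ → M} {m : ℕ} (hm : 0 < m)
    (hc : ∀ n ≤ 2 * m, c (2 * m - n) = c n) :
    ∑ n ∈ range (2 * m), c n = c 0 + 2 • ∑ n ∈ Ico 1 m, c n + c m := by
  have upper_half : ∑ n ∈ Ico (m + 1) (2 * m), c n = ∑ n ∈ Ico 1 m, c n :=
    calc ∑ n ∈ Ico (m + 1) (2 * m), c n
        = ∑ n ∈ Ico 1 m, c (2 * m - n) := by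
          rw [sum_Ico_reflect c 1 (by omega)]
          congr 2
          omega
      _ = ∑ n ∈ Ico 1 m, c n :=
          sum_congr rfl fun n hn => hc n (by have := mem_Ico.mp hn; omega)
  rw [range_eq_Ico, ← sum_Ico_consecutive c m.zero_le (by omega), sum_eq_sum_Ico_succ_bot hm,
    sum_eq_sum_Ico_succ_bot (show m < 2 * m by omega), upper_half, two_nsmul, zero_add]
  abel

theorem sum_Icc_two_pred (c : ℕ → M) (m : ℕ) :
    ∑ l ∈ Icc 2 m, c (l - 1) = ∑ n ∈ Ico 1 m, c n :=
  (sum_Ico_add' (fun l => c (l - 1)) 1 m 1).symm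

theorem sum_fin_of_even_of_neg {k : ℕ} [NeZero k] (heven : Even k) {c : Fin k → M}
    (hc : ∀ d, c (-d) = c d) :
    ∑ d, c d = c 0 + 2 • ∑ l ∈ Icc 2 (k / 2), c (Fin.ofNat k (l - 1)) +
      c ⟨k / 2, Nat.div_lt_self (NeZero.pos k) one_lt_two⟩ := by
  have two_mul_half : 2 * (k / 2) = k := Nat.two_mul_div_two_of_even heven
  have half_pos : 0 < k / 2 := by have := NeZero.pos k; omega
  have reflect (n : ℕ) (hn : n ≤ 2 * (k / 2)) :
      c (Fin.ofNat k (2 * (k / 2) - n)) = c (Fin.ofNat k n) := by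
    rw [two_mul_half] at hn ⊢
    rw [← neg_fin_ofNat hn, hc]
  have ofNat_half : Fin.ofNat k (k / 2) = ⟨k / 2, Nat.div_lt_self (NeZero.pos k) one_lt_two⟩ :=
    Fin.ext (Nat.mod_eq_of_lt (by omega))
  calc ∑ d, c d = ∑ n ∈ range (2 * (k / 2)), c (Fin.ofNat k n) := by
        rw [two_mul_half, sum_range]
        simp only [Fin.ofNat_val_eq_self]
    _ = _ := by
        rw [sum_range_two_mul_of_reflect half_pos reflect,
          sum_Icc_two_pred (fun n => c (Fin.ofNat k n)), ofNat_half, Fin.ofNat_zero]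

end EvenSum

theorem apply_comp_add_right_of_cyclic {α β : Type*} {k : ℕ} {f : (Fin k → α) → β}
    (hcyc : ∀ w, f w = f (fun i => w ⟨((i : ℕ) + 1) % k, Nat.mod_lt _ i.pos⟩))
    (d : Fin k) (w : Fin k → α) : f (fun i => w (i + d)) = f w := by
  have rotate (n : ℕ) : f (fun i => w ⟨((i : ℕ) + n) % k, Nat.mod_lt _ i.pos⟩) = f w := by
    induction n with
    | zero => simp only [add_zero, Nat.mod_eq_of_lt (Fin.is_lt _)]
    | succ n ih =>
      rw [← ih, hcyc fun i => w ⟨((i : ℕ) + n) % k, Nat.mod_lt _ i.pos⟩]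
      simp only [Nat.mod_add_mod, add_assoc, add_comm 1 n]
  exact rotate d

theorem diagonal_second_derivative_of_cyclic_even_general
    {𝕜 : Type*} [NontriviallyNormedField 𝕜]
    {E : Type*} [NormedAddCommGroup E] [NormedSpace 𝕜 E]
    {F : Type*} [NormedAddCommGroup F] [NormedSpace 𝕜 F]
    {k : ℕ} [NeZero k] (heven : Even k) {n : WithTop ℕ∞} (hn : minSmoothness 𝕜 2 ≤ n)
    {H : (Fin k → E) → F} {u : E} (hH : ContDiffAt 𝕜 n H (fun _ => u))
    (hcyc : ∀ w, H w = H (fun i => w ⟨((i : ℕ) + 1) % k, Nat.mod_lt _ i.pos⟩)) (h : E) :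
    fderiv 𝕜 (fderiv 𝕜 (fun x => H fun _ => x)) u h h =
      k • (diagHessian 𝕜 H u h 0 0 +
        2 • ∑ l ∈ Icc 2 (k / 2), diagHessian 𝕜 H u h 0 (Fin.ofNat k (l - 1)) +
        diagHessian 𝕜 H u h 0 ⟨k / 2, Nat.div_lt_self (NeZero.pos k) one_lt_two⟩) := by
  have contDiffAt_two : ContDiffAt 𝕜 2 H (fun _ => u) := hH.of_le (le_minSmoothness.trans hn)
  have translate (d i j : Fin k) :
      diagHessian 𝕜 H u h (i + d) (j + d) = diagHessian 𝕜 H u h i j :=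
    diagHessian_perm contDiffAt_two (Equiv.addRight d) (apply_comp_add_right_of_cyclic hcyc d)
      h i j
  have even_row (d : Fin k) : diagHessian 𝕜 H u h 0 (-d) = diagHessian 𝕜 H u h 0 d :=
    apply_zero_neg_of_symm_of_add_right (diagHessian_comm hn hH h) translate d
  rw [fderiv_fderiv_diag_eq_sum_diagHessian contDiffAt_two,
    sum_sum_eq_card_nsmul_of_add_right translate, Fintype.card_fin,
    sum_fin_of_even_of_neg heven even_row]

/-- For even `k ≥ 2` and a twice continuously differentiable cyclic `H : E^k → ℝ`, the
second derivative of the diagonal restriction `𝓗(u) = H(u,…,u)` satisfies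
`D²𝓗(u)(h,h) = k (B₁₁(h,h) + 2 Σ_{ℓ=2}^{k/2} B_{1ℓ}(h,h) + B_{1,k/2+1}(h,h))`, where
`B_{1ℓ}(h,h) = D²H(u,…,u)(ι₁ h, ι_ℓ h)` (slot `ℓ` is 0-based index `ℓ-1`). -/
theorem diagonal_second_derivative_of_cyclic_even
    {E : Type*} [NormedAddCommGroup E] [NormedSpace ℝ E]
    {k : ℕ} (hk : 2 ≤ k) (heven : Even k)
    (H : (Fin k → E) → ℝ) (hH : ContDiff ℝ 2 H)
    (hcyc : ∀ w : Fin k → E,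
      H w = H (fun i : Fin k => w ⟨((i : ℕ) + 1) % k, Nat.mod_lt _ i.pos⟩))
    (u h : E) :
    fderiv ℝ (fderiv ℝ (fun x : E => H (fun _ => x))) u h h =
      (k : ℝ) *
        (fderiv ℝ (fderiv ℝ H) (fun _ => u)
            (Pi.single (⟨0, by omega⟩ : Fin k) h) (Pi.single (⟨0, by omega⟩ : Fin k) h) +
          2 * ∑ l ∈ Finset.Icc 2 (k / 2),
            fderiv ℝ (fderiv ℝ H) (fun _ => u)
              (Pi.single (⟨0, by omega⟩ : Fin k) h)
              (Pi.single (⟨(l - 1) % k, Nat.mod_lt _ (by omega)⟩ : Fin k) h) +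
          fderiv ℝ (fderiv ℝ H) (fun _ => u)
            (Pi.single (⟨0, by omega⟩ : Fin k) h)
            (Pi.single (⟨k / 2, by omega⟩ : Fin k) h)) := by
  have : NeZero k := ⟨by omega⟩
  simpa only [nsmul_eq_mul, Nat.cast_ofNat] using!
    diagonal_second_derivative_of_cyclic_even_general (u := u) heven (by simp) hH.contDiffAt hcyc h
end

section
/- Let L > 0, Δt ≠ 0, and let u, v, w : ℝ → ℝ be smooth L-periodic functions satisfying, for every x ∈ ℝ, the linearly implicit polarised scheme for the KdV equation: (w(x) − u(x))/(2Δt) + (w'''(x) + u'''(x))/2 + d/dx[ v(x)(w(x) + v(x) + u(x))/3 ] = 0. Then the polarised Hamiltonian is exactly conserved: ∫₀ᴸ ( (1/4)(v'(x)² + w'(x)²) − (1/6)(v(x)²w(x) + w(x)²v(x)) ) dx = ∫₀ᴸ ( (1/4)(u'(x)² + v'(x)²) − (1/6)(u(x)²v(x) + v(x)²u(x)) ) dx. -/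
/-!
The scheme reads `(w - u) / (2Δt) = ∂ₓ G`, where `G = -(u'' + w'') / 2 - v (u + v + w) / 3` is a
discrete gradient of the polarised Hamiltonian: `H[v, w] - H[u, v] = ½ ∫ (w - u) G`. Hence
`H[v, w] - H[u, v] = Δt ∫ G ∂ₓ G`, which vanishes because `∂ₓ` is skew-adjoint on periodic
functions.
-/

open intervalIntegral

theorem periodic_deriv {𝕜 F : Type*} [NontriviallyNormedField 𝕜] [NormedAddCommGroup F]
    [NormedSpace 𝕜 F] {f : 𝕜 → F} {c : 𝕜} (hf : Function.Periodic f c) :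
    Function.Periodic (deriv f) c := fun x => by
  rw [← deriv_comp_add_const, hf.funext]

section PeriodicIntegrationByParts

variable {c : ℝ}

theorem integral_mul_deriv_eq_neg_integral_deriv_mul_of_periodic {A : Type*} [NormedRing A]
    [NormedAlgebra ℝ A] [CompleteSpace A] {f g : ℝ → A}
    (hf : ContDiff ℝ 1 f) (hg : ContDiff ℝ 1 g)
    (hfc : Function.Periodic f c) (hgc : Function.Periodic g c) (a : ℝ) :
    ∫ x in a..a + c, f x * deriv g x = -∫ x in a..a + c, deriv f x * g x := by
  rw [integral_mul_deriv_eq_deriv_mul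
      (fun x _ => (hf.differentiable_one x).hasDerivAt)
      (fun x _ => (hg.differentiable_one x).hasDerivAt)
      (hf.continuous_deriv_one.intervalIntegrable _ _)
      (hg.continuous_deriv_one.intervalIntegrable _ _),
    hfc a, hgc a, sub_self, zero_sub]

section Commutative

variable {A : Type*} [NormedCommRing A] [NormedAlgebra ℝ A] [CompleteSpace A] {f g : ℝ → A}

theorem integral_mul_deriv_self_eq_zero_of_periodic
    (hf : ContDiff ℝ 1 f) (hfc : Function.Periodic f c) (a : ℝ) :
    ∫ x in a..a + c, f x * deriv f x = 0 := by
  have skew := integral_mul_deriv_eq_neg_integral_deriv_mul_of_periodic hf hf hfc hfc a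
  simp only [mul_comm (deriv f _)] at skew
  have : IsAddTorsionFree A := .of_isTorsionFree ℝ A
  exact self_eq_neg.mp skew

theorem integral_sq_deriv_sub_sq_deriv_of_periodic
    (hf : ContDiff ℝ 2 f) (hg : ContDiff ℝ 2 g)
    (hfc : Function.Periodic f c) (hgc : Function.Periodic g c) (a : ℝ) :
    ∫ x in a..a + c, (deriv f x ^ 2 - deriv g x ^ 2) =
      -∫ x in a..a + c, (f x - g x) * (deriv (deriv f) x + deriv (deriv g) x) := by
  have hf₁ : ContDiff ℝ 1 f := hf.of_le one_le_two
  have hg₁ : ContDiff ℝ 1 g := hg.of_le one_le_two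
  have hf' : ContDiff ℝ 1 (deriv f) := hf.deriv'
  have hg' : ContDiff ℝ 1 (deriv g) := hg.deriv'
  have by_parts := integral_mul_deriv_eq_neg_integral_deriv_mul_of_periodic
    (hf₁.sub hg₁) (hf'.add hg') (hfc.sub hgc) ((periodic_deriv hfc).add (periodic_deriv hgc)) a
  have deriv_difference (x : ℝ) : deriv (fun y => f y - g y) x = deriv f x - deriv g x :=
    deriv_fun_sub (hf₁.differentiable_one x) (hg₁.differentiable_one x)
  have deriv_sum (x : ℝ) :
      deriv (fun y => deriv f y + deriv g y) x = deriv (deriv f) x + deriv (deriv g) x :=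
    deriv_fun_add (hf'.differentiable_one x) (hg'.differentiable_one x)
  simp only [deriv_difference, deriv_sum] at by_parts
  rw [by_parts, neg_neg]
  exact integral_congr fun x _ => by ring

end Commutative

end PeriodicIntegrationByParts

/-- The two-step polarised KdV Hamiltonian `H[a, b]` on a period `[0, L]`, a symmetric function of
`a` and `b` which is at most quadratic in each and restricts to the KdV Hamiltonian on `a = b`. -/
noncomputable def polarisedHamiltonian (L : ℝ) (a b : ℝ → ℝ) : ℝ :=
  ∫ x in (0 : ℝ)..L, ((1 / 4) * ((deriv a x) ^ 2 + (deriv b x) ^ 2) -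
    (1 / 6) * ((a x) ^ 2 * b x + (b x) ^ 2 * a x))

/-- The discrete gradient of the polarised KdV Hamiltonian at three consecutive time levels
`u, v, w`. It replaces the variational derivative `-u'' - u²` of the KdV Hamiltonian, to which it
reduces when `u = v = w`. -/
noncomputable def polarisedGradient (u v w : ℝ → ℝ) (x : ℝ) : ℝ :=
  -((deriv (deriv w) x + deriv (deriv u) x) / 2 + v x * (w x + v x + u x) / 3)

section PolarisedKdV

variable {L : ℝ} {u v w : ℝ → ℝ}

theorem periodic_polarisedGradient (hup : Function.Periodic u L) (hvp : Function.Periodic v L)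
    (hwp : Function.Periodic w L) : Function.Periodic (polarisedGradient u v w) L := fun x => by
  simp only [polarisedGradient, hup x, hvp x, hwp x, periodic_deriv (periodic_deriv hup) x,
    periodic_deriv (periodic_deriv hwp) x]

theorem contDiff_polarisedGradient {n : WithTop ℕ∞} (hu : ContDiff ℝ (n + 2) u)
    (hv : ContDiff ℝ n v) (hw : ContDiff ℝ (n + 2) w) :
    ContDiff ℝ n (polarisedGradient u v w) := by
  have hn : n + 2 = n + 1 + 1 := by rw [add_assoc, one_add_one_eq_two]
  have hu'' : ContDiff ℝ n (deriv (deriv u)) := (hn ▸ hu).deriv'.deriv'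
  have hw'' : ContDiff ℝ n (deriv (deriv w)) := (hn ▸ hw).deriv'.deriv'
  have hu₀ : ContDiff ℝ n u := hu.of_le le_self_add
  have hw₀ : ContDiff ℝ n w := hw.of_le le_self_add
  unfold polarisedGradient
  fun_prop

theorem deriv_polarisedGradient (hu : ContDiff ℝ 3 u) (hv : ContDiff ℝ 1 v)
    (hw : ContDiff ℝ 3 w) (x : ℝ) :
    deriv (polarisedGradient u v w) x =
      -((deriv (deriv (deriv w)) x + deriv (deriv (deriv u)) x) / 2 +
        deriv (fun y => v y * (w y + v y + u y) / 3) x) := by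
  have hu' : ContDiff ℝ 2 (deriv u) := hu.deriv'
  have hw' : ContDiff ℝ 2 (deriv w) := hw.deriv'
  have hu'' : DifferentiableAt ℝ (deriv (deriv u)) x := hu'.differentiable_deriv_two x
  have hw'' : DifferentiableAt ℝ (deriv (deriv w)) x := hw'.differentiable_deriv_two x
  have hu₀ : DifferentiableAt ℝ u x := hu.differentiable three_ne_zero x
  have hv₀ : DifferentiableAt ℝ v x := hv.differentiable_one x
  have hw₀ : DifferentiableAt ℝ w x := hw.differentiable three_ne_zero x
  unfold polarisedGradient
  rw [deriv.fun_neg, deriv_fun_add (by fun_prop) (by fun_prop), deriv_div_const,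
    deriv_fun_add hw'' hu'']

theorem polarisedHamiltonian_sub_polarisedHamiltonian (hu : ContDiff ℝ 2 u)
    (hv : ContDiff ℝ 1 v) (hw : ContDiff ℝ 2 w)
    (hup : Function.Periodic u L) (hwp : Function.Periodic w L) :
    polarisedHamiltonian L v w - polarisedHamiltonian L u v =
      (1 / 2) * ∫ x in (0 : ℝ)..L, (w x - u x) * polarisedGradient u v w x := by
  have hu₀ : Continuous u := hu.continuous
  have hv₀ : Continuous v := hv.continuous
  have hw₀ : Continuous w := hw.continuous
  have hu' : Continuous (deriv u) := hu.continuous_deriv one_le_two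
  have hw' : Continuous (deriv w) := hw.continuous_deriv one_le_two
  have by_parts := integral_sq_deriv_sub_sq_deriv_of_periodic hw hu hwp hup 0
  rw [zero_add] at by_parts
  calc
    polarisedHamiltonian L v w - polarisedHamiltonian L u v
      = ∫ x in (0 : ℝ)..L, ((1 / 4) * ((deriv w x) ^ 2 - (deriv u x) ^ 2) -
          (1 / 6) * ((w x - u x) * (v x * (w x + v x + u x)))) := by
        unfold polarisedHamiltonian
        rw [← integral_sub (Continuous.intervalIntegrable (by fun_prop) _ _)
          (Continuous.intervalIntegrable (by fun_prop) _ _)]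
        exact integral_congr fun x _ => by ring
    _ = (1 / 4) * (-∫ x in (0 : ℝ)..L, (w x - u x) * (deriv (deriv w) x + deriv (deriv u) x)) -
          (1 / 6) * ∫ x in (0 : ℝ)..L, (w x - u x) * (v x * (w x + v x + u x)) := by
        rw [integral_sub (Continuous.intervalIntegrable (by fun_prop) _ _)
          (Continuous.intervalIntegrable (by fun_prop) _ _), integral_const_mul,
          integral_const_mul, by_parts]
    _ = (1 / 2) * ∫ x in (0 : ℝ)..L, (w x - u x) * polarisedGradient u v w x := by
        rw [← integral_neg, ← integral_const_mul, ← integral_const_mul, ← integral_const_mul,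
          ← integral_sub (Continuous.intervalIntegrable (by fun_prop) _ _)
          (Continuous.intervalIntegrable (by fun_prop) _ _)]
        exact integral_congr fun x _ => by simp only [polarisedGradient]; ring

theorem kdv_linearly_implicit_scheme_conserves_polarised_hamiltonian_general {Δt : ℝ}
    (hΔt : Δt ≠ 0)
    (hu : ContDiff ℝ 3 u) (hv : ContDiff ℝ 1 v) (hw : ContDiff ℝ 3 w)
    (hup : Function.Periodic u L) (hvp : Function.Periodic v L) (hwp : Function.Periodic w L)
    (hscheme : ∀ x : ℝ,
      (w x - u x) / (2 * Δt) +
        (deriv (deriv (deriv w)) x + deriv (deriv (deriv u)) x) / 2 +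
        deriv (fun y => v y * (w y + v y + u y) / 3) x = 0) :
    polarisedHamiltonian L v w = polarisedHamiltonian L u v := by
  have increment_eq (x : ℝ) : w x - u x = deriv (polarisedGradient u v w) x * (2 * Δt) := by
    rw [deriv_polarisedGradient hu hv hw, ← div_eq_iff (mul_ne_zero two_ne_zero hΔt)]
    linarith [hscheme x]
  have gradient_orthogonal :
      ∫ x in (0 : ℝ)..L, polarisedGradient u v w x * deriv (polarisedGradient u v w) x = 0 := by
    simpa only [zero_add] using integral_mul_deriv_self_eq_zero_of_periodic
      (contDiff_polarisedGradient hu hv hw) (periodic_polarisedGradient hup hvp hwp) 0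
  refine sub_eq_zero.mp ?_
  calc
    polarisedHamiltonian L v w - polarisedHamiltonian L u v
      = (1 / 2) * ∫ x in (0 : ℝ)..L, (w x - u x) * polarisedGradient u v w x :=
        polarisedHamiltonian_sub_polarisedHamiltonian (hu.of_le (by norm_num)) hv
          (hw.of_le (by norm_num)) hup hwp
    _ = Δt * ∫ x in (0 : ℝ)..L,
          polarisedGradient u v w x * deriv (polarisedGradient u v w) x := by
        rw [← integral_const_mul, ← integral_const_mul]
        exact integral_congr fun x _ => by simp only [increment_eq]; ring
    _ = 0 := by rw [gradient_orthogonal, mul_zero]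

end PolarisedKdV

/-- One step of the linearly implicit polarised scheme for the KdV equation,
`(w - u)/(2Δt) + (w''' + u''')/2 + (v(w + v + u)/3)' = 0`, exactly conserves the
polarised Hamiltonian `H[a,b] = ∫₀ᴸ ((1/4)(a_x² + b_x²) - (1/6)(a²b + b²a)) dx`:
`H[v,w] = H[u,v]` for smooth L-periodic functions. -/
theorem kdv_linearly_implicit_scheme_conserves_polarised_hamiltonian
    (L Δt : ℝ) (hL : 0 < L) (hΔt : Δt ≠ 0)
    (u v w : ℝ → ℝ)
    (hu : ContDiff ℝ (⊤ : ℕ∞) u) (hv : ContDiff ℝ (⊤ : ℕ∞) v) (hw : ContDiff ℝ (⊤ : ℕ∞) w)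
    (hup : Function.Periodic u L) (hvp : Function.Periodic v L)
    (hwp : Function.Periodic w L)
    (hscheme : ∀ x : ℝ,
      (w x - u x) / (2 * Δt) +
        (deriv (deriv (deriv w)) x + deriv (deriv (deriv u)) x) / 2 +
        deriv (fun y => v y * (w y + v y + u y) / 3) x = 0) :
    (∫ x in (0:ℝ)..L,
        ((1 / 4) * ((deriv v x) ^ 2 + (deriv w x) ^ 2) -
          (1 / 6) * ((v x) ^ 2 * w x + (w x) ^ 2 * v x))) =
      ∫ x in (0:ℝ)..L,
        ((1 / 4) * ((deriv u x) ^ 2 + (deriv v x) ^ 2) -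
          (1 / 6) * ((u x) ^ 2 * v x + (v x) ^ 2 * u x)) := by
  exact kdv_linearly_implicit_scheme_conserves_polarised_hamiltonian_general hΔt
    (contDiff_infty.mp hu 3) (contDiff_infty.mp hv 1) (contDiff_infty.mp hw 3) hup hvp hwp hscheme
end
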